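/- Let ν, b, μ ∈ ℂ with ν ≠ 0 and μ ≠ 0, suppose b² = 16μν, let k, ξ₀ ∈ ℂ with k² = μ/ν, and set A = −18 μ³/ν. Then the function u(ξ) = 120ν τ(ξ)³ − 15b τ(ξ)² + (60μ/19 − 30νk² − 15b²/(76ν)) τ(ξ) + (5/2)b k² − 13b³/(608ν²) + 7μb/(76ν), where τ(ξ) = (k/2)·tanh(k(ξ−ξ₀)/2), solves the KS ODE on the open set U = {ξ ∈ ℂ : cosh(k(ξ−ξ₀)/2) ≠ 0}. -/

import Mathlib

open Complex

/-
Put `m = b / (4ν)`, so that `m² = k²`. By the Riccati equation for `tanh`, `p = m/2 - τ` and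
`q = m/2 + τ` satisfy `p' = -pq` and `q' = pq`, with `p + q = m`, and the asserted solution is
`u = 120ν p²q - 6νm³`. The constant cancels the terms of order zero, and what remains for
`v = 120ν p²q` is `ν (∂ - m) (∂ + 2m) (∂ + 3m) v + v²/2 = 0`. Each linear factor raises one
exponent: applied successively to `p²q` they give `-3 p²q²`, `-12 p³q²` and `-60 p⁴q²`, which the
square balances.
-/

section LogisticPair

variable {R A : Type*} [CommRing R] [CommRing A] [Algebra R A] (D : Derivation R A A)

theorem derivation_const_mul {c : A} (hc : D c = 0) (x : A) : D (c * x) = c * D x := by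
  simp [hc]

theorem derivation_ofNat_mul (n : ℕ) [n.AtLeastTwo] (x : A) :
    D (ofNat(n) * x) = ofNat(n) * D x :=
  derivation_const_mul D (D.map_natCast n) x

variable {p q : A}

theorem derivation_pow_mul_pow_of_logistic (hp : D p = -(p * q)) (hq : D q = p * q) (a b : ℕ) :
    D (p ^ a * q ^ b) = (b * p - a * q) * (p ^ a * q ^ b) := by
  have pow_p : D (p ^ a) = -(a * q * p ^ a) := by
    cases a with
    | zero => simp
    | succ a =>
      simp only [Derivation.leibniz_pow, hp, add_tsub_cancel_right, smul_eq_mul, nsmul_eq_mul]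
      ring
  have pow_q : D (q ^ b) = b * p * q ^ b := by
    cases b with
    | zero => simp
    | succ b =>
      simp only [Derivation.leibniz_pow, hq, add_tsub_cancel_right, smul_eq_mul, nsmul_eq_mul]
      ring
  rw [Derivation.leibniz, pow_p, pow_q]
  simp only [smul_eq_mul]
  ring

theorem derivation_pow_mul_pow_add_of_logistic (hp : D p = -(p * q)) (hq : D q = p * q) (a b : ℕ) :
    D (p ^ a * q ^ b) + a * (p + q) * (p ^ a * q ^ b) = (a + b) * (p ^ (a + 1) * q ^ b) := by
  rw [derivation_pow_mul_pow_of_logistic D hp hq]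
  ring

theorem derivation_pow_mul_pow_sub_of_logistic (hp : D p = -(p * q)) (hq : D q = p * q) (a b : ℕ) :
    D (p ^ a * q ^ b) - b * (p + q) * (p ^ a * q ^ b) = -((a + b) * (p ^ a * q ^ (b + 1))) := by
  rw [derivation_pow_mul_pow_of_logistic D hp hq]
  ring

theorem derivation_cubic_sq_mul_of_logistic (hp : D p = -(p * q)) (hq : D q = p * q) :
    D^[3] (p ^ 2 * q) + 4 * (p + q) * D^[2] (p ^ 2 * q) + (p + q) ^ 2 * D (p ^ 2 * q)
      - 6 * (p + q) ^ 3 * (p ^ 2 * q) = -60 * (p ^ 2 * q) ^ 2 := by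
  have hm : D (p + q) = 0 := by rw [map_add, hp, hq, neg_add_cancel]
  have factor₁ := derivation_pow_mul_pow_sub_of_logistic D hp hq 2 1
  have factor₂ := derivation_pow_mul_pow_add_of_logistic D hp hq 2 2
  have factor₃ := derivation_pow_mul_pow_add_of_logistic D hp hq 3 2
  simp only [pow_one, Nat.cast_ofNat, Nat.cast_one, Nat.reduceAdd] at factor₁ factor₂ factor₃
  generalize p + q = m at *
  have D_one : D (p ^ 2 * q) = m * (p ^ 2 * q) - 3 * (p ^ 2 * q ^ 2) := by
    linear_combination factor₁
  have D_two : D (p ^ 2 * q ^ 2) = 4 * (p ^ 3 * q ^ 2) - 2 * (m * (p ^ 2 * q ^ 2)) := by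
    linear_combination factor₂
  have D_three : D (p ^ 3 * q ^ 2) = 5 * (p ^ 4 * q ^ 2) - 3 * (m * (p ^ 3 * q ^ 2)) := by
    linear_combination factor₃
  simp only [Function.iterate_succ_apply', Function.iterate_zero_apply, D_one, D_two, D_three,
    map_sub, derivation_const_mul D hm, derivation_ofNat_mul]
  ring

-- The equation is doubled, so that `2` need not be invertible; the right side is `-2A`.
theorem ks_derivation_of_logistic {ν : A} (hν : D ν = 0) (hp : D p = -(p * q))
    (hq : D q = p * q) {u : A} (hu : u = 120 * ν * (p ^ 2 * q) - 6 * ν * (p + q) ^ 3) :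
    2 * (ν * D^[3] u + 4 * ν * (p + q) * D^[2] u + ν * (p + q) ^ 2 * D u) + u ^ 2
      = (6 * ν * (p + q) ^ 3) ^ 2 := by
  have h_scale : D (120 * ν) = 0 := by rw [derivation_ofNat_mul, hν, mul_zero]
  have D_u : D u = 120 * ν * D (p ^ 2 * q) := by
    have h_const : D (6 * ν * (p + q) ^ 3) = 0 := by
      rw [mul_assoc, derivation_ofNat_mul]
      simp [Derivation.leibniz_pow, hν, hp, hq]
    rw [hu, map_sub, h_const, sub_zero, derivation_const_mul D h_scale]
  have third_order := derivation_cubic_sq_mul_of_logistic D hp hq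
  simp only [Function.iterate_succ_apply', Function.iterate_zero_apply, D_u,
    derivation_const_mul D h_scale] at third_order ⊢
  rw [hu]
  linear_combination 240 * ν ^ 2 * third_order

end LogisticPair

section AutonomousODE

open Polynomial Topology

variable {𝕜 : Type*} [NontriviallyNormedField 𝕜] {y : 𝕜 → 𝕜} {x : 𝕜}

theorem hasDerivAt_eval_of_autonomous {Q : 𝕜[X]} (hy : HasDerivAt y (Q.eval (y x)) x) (P : 𝕜[X]) :
    HasDerivAt (fun z ↦ P.eval (y z)) ((mkDerivation 𝕜 Q P).eval (y x)) x := by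
  rw [mkDerivation_apply, smul_eq_mul, eval_mul]
  exact (P.hasDerivAt (y x)).comp x hy

theorem iterate_deriv_eval_of_autonomous {Q : 𝕜[X]}
    (hy : ∀ᶠ z in 𝓝 x, HasDerivAt y (Q.eval (y z)) z) (P : 𝕜[X]) (n : ℕ) :
    deriv^[n] (fun z ↦ P.eval (y z)) =ᶠ[𝓝 x]
      fun z ↦ ((mkDerivation 𝕜 Q)^[n] P).eval (y z) := by
  induction n with
  | zero => rfl
  | succ n ih =>
    simp only [Function.iterate_succ_apply']
    exact ih.deriv.trans (hy.mono fun _ hz ↦ (hasDerivAt_eval_of_autonomous hz _).deriv)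

theorem ks_deriv_of_logistic {m : 𝕜} (hy : ∀ᶠ z in 𝓝 x, HasDerivAt y (-(y z * (m - y z))) z)
    (ν : 𝕜) {u : 𝕜 → 𝕜} (hu : ∀ z, u z = 120 * ν * (y z ^ 2 * (m - y z)) - 6 * ν * m ^ 3) :
    2 * (ν * deriv^[3] u x + 4 * ν * m * deriv^[2] u x + ν * m ^ 2 * deriv u x) + u x ^ 2
      = (6 * ν * m ^ 3) ^ 2 := by
  set Q : 𝕜[X] := -(X * (C m - X)) with hQ
  set P : 𝕜[X] := 120 * C ν * (X ^ 2 * (C m - X)) - 6 * C ν * (X + (C m - X)) ^ 3 with hP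
  have hyQ : ∀ᶠ z in 𝓝 x, HasDerivAt y (Q.eval (y z)) z := by simpa [hQ] using hy
  have u_eq : u = fun z ↦ P.eval (y z) := by
    funext z
    simp [hu, hP]
  have deriv_u (n : ℕ) : deriv^[n] u x = ((mkDerivation 𝕜 Q)^[n] P).eval (y x) := by
    rw [u_eq]
    exact (iterate_deriv_eval_of_autonomous hyQ P n).eq_of_nhds
  have ks_P := ks_derivation_of_logistic (mkDerivation 𝕜 Q) (derivation_C _ ν)
    (mkDerivation_X 𝕜 Q) (by simp [hQ]) hP
  rw [deriv_u 3, deriv_u 2, ← Function.iterate_one deriv, deriv_u 1, congrFun u_eq x]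
  simpa using congrArg (eval (y x)) ks_P

end AutonomousODE

theorem hasDerivAt_tanh {z : ℂ} (hz : cosh z ≠ 0) : HasDerivAt tanh (1 - tanh z ^ 2) z := by
  have tanh_eq : tanh = fun w ↦ sinh w / cosh w := funext tanh_eq_sinh_div_cosh
  rw [tanh_eq]
  refine ((hasDerivAt_sinh z).div (hasDerivAt_cosh z) hz).congr_deriv ?_
  field_simp

theorem hasDerivAt_half_mul_tanh_half {k ξ₀ ξ : ℂ} (hξ : cosh (k * (ξ - ξ₀) / 2) ≠ 0) :
    HasDerivAt (fun z ↦ k / 2 * tanh (k * (z - ξ₀) / 2))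
      (k ^ 2 / 4 - (k / 2 * tanh (k * (ξ - ξ₀) / 2)) ^ 2) ξ := by
  have inner_deriv : HasDerivAt (fun z ↦ k * (z - ξ₀) / 2) (k / 2) ξ := by
    simpa using (((hasDerivAt_id ξ).sub_const ξ₀).const_mul k).div_const 2
  refine (((hasDerivAt_tanh hξ).comp ξ inner_deriv).const_mul (k / 2)).congr_deriv ?_
  ring

/-- a trigonometric (tanh-polynomial) solution of the KS traveling-wave ODE
`ν u''' + b u'' + μ u' + u²/2 + A = 0`. -/
theorem ks_trig_solution_case5
    (ν b μ A k ξ₀ : ℂ) (hν : ν ≠ 0) (hμ : μ ≠ 0)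
    (hb : b ^ 2 = 16 * μ * ν) (hk : k ^ 2 = μ / ν)
    (hA : A = -18 * μ ^ 3 / ν)
    (τ u : ℂ → ℂ)
    (hτ : ∀ ξ : ℂ, τ ξ = k / 2 * Complex.tanh (k * (ξ - ξ₀) / 2))
    (hu : ∀ ξ : ℂ, u ξ =
      120 * ν * (τ ξ) ^ 3 - 15 * b * (τ ξ) ^ 2
        + (60 * μ / 19 - 30 * ν * k ^ 2 - 15 * b ^ 2 / (76 * ν)) * τ ξ
        + 5 / 2 * b * k ^ 2 - 13 * b ^ 3 / (608 * ν ^ 2) + 7 * μ * b / (76 * ν)) :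
    ∀ ξ : ℂ, Complex.cosh (k * (ξ - ξ₀) / 2) ≠ 0 →
      ν * deriv^[3] u ξ + b * deriv^[2] u ξ + μ * deriv u ξ + (u ξ) ^ 2 / 2 + A = 0 := by
  intro ξ hξ
  obtain ⟨m, rfl⟩ : ∃ m, b = 4 * ν * m := ⟨b / (4 * ν), by field_simp⟩
  obtain rfl : μ = ν * m ^ 2 := mul_left_cancel₀ hν (by linear_combination -hb / 16)
  have hkm : k ^ 2 = m ^ 2 := by rw [hk, mul_div_cancel_left₀ _ hν]
  have logistic : ∀ᶠ z in nhds ξ,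
      HasDerivAt (fun z ↦ m / 2 - τ z) (-((m / 2 - τ z) * (m - (m / 2 - τ z)))) z := by
    have cosh_ne : ∀ᶠ z in nhds ξ, cosh (k * (z - ξ₀) / 2) ≠ 0 :=
      ContinuousAt.eventually_ne (by fun_prop) hξ
    filter_upwards [cosh_ne] with z hz
    rw [funext hτ]
    refine ((hasDerivAt_half_mul_tanh_half hz).const_sub (m / 2)).congr_deriv ?_
    linear_combination -hkm / 4
  have u_eq (z : ℂ) :
      u z = 120 * ν * ((m / 2 - τ z) ^ 2 * (m - (m / 2 - τ z))) - 6 * ν * m ^ 3 := by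
    rw [hu, hkm]
    field_simp
    ring
  have hA' : A = -18 * ν ^ 2 * m ^ 6 := by
    rw [hA]
    field_simp
  linear_combination ks_deriv_of_logistic logistic ν u_eq / 2 + hA'
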